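/- For all x ∈ 𝒳 and y ∈ 𝒴, p_Y(y)·Pr(A_y = x) = p_X(x)·Pr(B^x = y), where each side is interpreted as 0 when the corresponding marginal probability p_Y(y) or p_X(x) vanishes. That is, the joint distribution of (A_{Z|Y},Y) equals the joint distribution of (X,B_{Z|X}). -/

import Mathlib

open Finset

/-- Shannon entropy of a distribution on a finite type (natural-log base). -/
noncomputable def ent {α : Type*} [Fintype α] (p : α → ℝ) : ℝ :=
  ∑ a, Real.negMulLog (p a)

/-- Mutual information between the two coordinates of a joint distribution. -/
noncomputable def mutInfo {α β : Type*} [Fintype α] [Fintype β] (q : α × β → ℝ) : ℝ :=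
  ent (fun a => ∑ b, q (a, b)) + ent (fun b => ∑ a, q (a, b)) - ent q

/-- Conditional entropy of the first coordinate given the second: H(A|B) = H(A,B) - H(B). -/
noncomputable def condEntFst {α β : Type*} [Fintype α] [Fintype β] (q : α × β → ℝ) : ℝ :=
  ent q - ent (fun b => ∑ a, q (a, b))

/-- Conditional entropy of the second coordinate given the first: H(B|A) = H(A,B) - H(A). -/
noncomputable def condEntSnd {α β : Type*} [Fintype α] [Fintype β] (q : α × β → ℝ) : ℝ :=
  ent q - ent (fun a => ∑ b, q (a, b))

section PID

variable {X Y Z : Type*} [Fintype X] [Fintype Y] [Fintype Z]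

/-- 𝒳-marginal of a joint distribution on 𝒳×𝒴×𝒵. -/
noncomputable def pX (p : X × Y × Z → ℝ) (x : X) : ℝ := ∑ y, ∑ z, p (x, y, z)

/-- 𝒴-marginal. -/
noncomputable def pY (p : X × Y × Z → ℝ) (y : Y) : ℝ := ∑ x, ∑ z, p (x, y, z)

/-- 𝒵-marginal. -/
noncomputable def pZ (p : X × Y × Z → ℝ) (z : Z) : ℝ := ∑ x, ∑ y, p (x, y, z)

/-- The do-operation: q(x,y,z) = p(x,y,z)·c(z)/p_Z(z) if p_Z(z) > 0, else 0. -/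
noncomputable def doOp (p : X × Y × Z → ℝ) (c : Z → ℝ) : X × Y × Z → ℝ :=
  fun t => if 0 < pZ p t.2.2 then p t * c t.2.2 / pZ p t.2.2 else 0

/-- (𝒳,𝒵)-marginal. -/
noncomputable def margXZ (p : X × Y × Z → ℝ) : X × Z → ℝ := fun t => ∑ y, p (t.1, y, t.2)

/-- (𝒴,𝒵)-marginal. -/
noncomputable def margYZ (p : X × Y × Z → ℝ) : Y × Z → ℝ := fun t => ∑ x, p (x, t.1, t.2)

/-- (𝒳,𝒴)-marginal. -/
noncomputable def margXY (p : X × Y × Z → ℝ) : X × Y → ℝ := fun t => ∑ z, p (t.1, t.2, z)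

/-- c_y(z) = Pr(Z = z | Y = y). -/
noncomputable def cy (p : X × Y × Z → ℝ) (y : Y) : Z → ℝ :=
  fun z => (∑ x, p (x, y, z)) / pY p y

/-- The distribution of (A_y, B_y, C_y) = do(p | c_y). -/
noncomputable def doy (p : X × Y × Z → ℝ) (y : Y) : X × Y × Z → ℝ := doOp p (cy p y)

/-- c^x(z) = Pr(Z = z | X = x). -/
noncomputable def cx (p : X × Y × Z → ℝ) (x : X) : Z → ℝ :=
  fun z => (∑ y, p (x, y, z)) / pX p x

/-- The distribution of (A^x, B^x, C^x) = do(p | c^x). -/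
noncomputable def dox (p : X × Y × Z → ℝ) (x : X) : X × Y × Z → ℝ := doOp p (cx p x)

/-- Unique information Un(X→Z|Y) = Σ_{y : p_Y(y)>0} p_Y(y)·I(A_y;C_y). -/
noncomputable def Un (p : X × Y × Z → ℝ) : ℝ :=
  ∑ y ∈ Finset.univ.filter (fun y => 0 < pY p y), pY p y * mutInfo (margXZ (doy p y))

/-- Unique information Un(Y→Z|X) = Σ_{x : p_X(x)>0} p_X(x)·I(B^x;C^x). -/
noncomputable def UnYX (p : X × Y × Z → ℝ) : ℝ :=
  ∑ x ∈ Finset.univ.filter (fun x => 0 < pX p x), pX p x * mutInfo (margYZ (dox p x))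

/-- Redundant information Red(X,Y→Z) = I(X;Z) − Un(X→Z|Y). -/
noncomputable def Red (p : X × Y × Z → ℝ) : ℝ := mutInfo (margXZ p) - Un p

/-- Conditional mutual information I(X;Z|Y) = H(X,Y) + H(Y,Z) − H(Y) − H(X,Y,Z). -/
noncomputable def condMI (p : X × Y × Z → ℝ) : ℝ :=
  ent (margXY p) + ent (margYZ p) - ent (pY p) - ent p

/-- Synergistic information Syn(X,Y→Z) = I(X;Z|Y) − Un(X→Z|Y). -/
noncomputable def Syn (p : X × Y × Z → ℝ) : ℝ := condMI p - Un p

end PID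

/-!
Draw `Y`, then `Z` given `Y`, then `A` from the law of `X` given `Z`. Then `(A, Y)` has mass
`∑ z, p(x, z) p(y, z) / p(z)` at `(x, y)`: `A` and `Y` are conditionally independent given `Z`.
This expression is symmetric in the roles of `X` and `Y`, so starting from `X` and drawing `B`
leads to the same law.
-/

theorem ite_pos_mul_of_nonneg {R : Type*} [MulZeroClass R] [PartialOrder R] {a : R}
    [Decidable (0 < a)] (ha : 0 ≤ a) (b : R) : (if 0 < a then a * b else 0) = a * b := by
  rcases ha.eq_or_lt with rfl | hpos
  · rw [zero_mul, ite_self]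
  · exact if_pos hpos

section Marginals

variable {X Y Z : Type*} {p : X × Y × Z → ℝ}

theorem margYZ_nonneg [Fintype X] (hp : ∀ t, 0 ≤ p t) (t : Y × Z) : 0 ≤ margYZ p t :=
  sum_nonneg fun _ _ => hp _

theorem pX_nonneg [Fintype Y] [Fintype Z] (hp : ∀ t, 0 ≤ p t) (x : X) : 0 ≤ pX p x :=
  sum_nonneg fun _ _ => sum_nonneg fun _ _ => hp _

theorem pY_nonneg [Fintype X] [Fintype Z] (hp : ∀ t, 0 ≤ p t) (y : Y) : 0 ≤ pY p y :=
  sum_nonneg fun _ _ => sum_nonneg fun _ _ => hp _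

theorem pZ_nonneg [Fintype X] [Fintype Y] (hp : ∀ t, 0 ≤ p t) (z : Z) : 0 ≤ pZ p z :=
  sum_nonneg fun _ _ => sum_nonneg fun _ _ => hp _

theorem pX_eq_sum_margXZ [Fintype Y] [Fintype Z] (p : X × Y × Z → ℝ) (x : X) :
    pX p x = ∑ z, margXZ p (x, z) :=
  sum_comm

theorem pY_eq_sum_margYZ [Fintype X] [Fintype Z] (p : X × Y × Z → ℝ) (y : Y) :
    pY p y = ∑ z, margYZ p (y, z) :=
  sum_comm

theorem margYZ_eq_zero_of_pY_eq_zero [Fintype X] [Fintype Z] (hp : ∀ t, 0 ≤ p t) {y : Y}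
    (hy : pY p y = 0) (z : Z) : margYZ p (y, z) = 0 := by
  rw [pY_eq_sum_margYZ, sum_eq_zero_iff_of_nonneg fun _ _ => margYZ_nonneg hp _] at hy
  exact hy z (mem_univ z)

theorem pY_mul_cy [Fintype X] [Fintype Z] (hp : ∀ t, 0 ≤ p t) (y : Y) (z : Z) :
    pY p y * cy p y z = margYZ p (y, z) :=
  mul_div_cancel_of_imp' fun hy => margYZ_eq_zero_of_pY_eq_zero hp hy z

end Marginals

section Coupling

variable {X Y Z : Type*} [Fintype X] [Fintype Y] {p : X × Y × Z → ℝ}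

theorem margXZ_doOp (hp : ∀ t, 0 ≤ p t) (c : Z → ℝ) (x : X) (z : Z) :
    margXZ (doOp p c) (x, z) = margXZ p (x, z) * (c z / pZ p z) := by
  rcases (pZ_nonneg hp z).eq_or_lt with hz | hz
  · simp [margXZ, doOp, ← hz]
  · simp only [margXZ, doOp, if_pos hz, sum_mul, mul_div_assoc]

/-- The law of the conditionally independent coupling of the 𝒳- and 𝒴-coordinates given the
𝒵-coordinate, which both sides of the theorem compute. The summand is `0` where `pZ p z = 0`. -/
noncomputable def condIndepCoupling [Fintype Z] (p : X × Y × Z → ℝ) (x : X) (y : Y) : ℝ :=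
  ∑ z, margXZ p (x, z) * (margYZ p (y, z) / pZ p z)

theorem pY_mul_pX_doy [Fintype Z] (hp : ∀ t, 0 ≤ p t) (x : X) (y : Y) :
    pY p y * pX (doy p y) x = condIndepCoupling p x y :=
  calc pY p y * pX (doy p y) x
      = pY p y * ∑ z, margXZ p (x, z) * (cy p y z / pZ p z) := by
        simp only [pX_eq_sum_margXZ, doy, margXZ_doOp hp]
    _ = ∑ z, margXZ p (x, z) * (pY p y * cy p y z / pZ p z) := by
        simp only [mul_sum, mul_div_assoc, mul_left_comm]
    _ = condIndepCoupling p x y := by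
        simp only [pY_mul_cy hp, condIndepCoupling]

end Coupling

section Swap

variable {X Y Z : Type*}

/-- The joint distribution on 𝒴×𝒳×𝒵 obtained by exchanging the first two coordinates. It turns
`dox` into `doy`, so that facts about one carry over to the other. -/
def swapXY (p : X × Y × Z → ℝ) : Y × X × Z → ℝ := fun t => p (t.2.1, t.1, t.2.2)

theorem margXZ_swapXY [Fintype X] (p : X × Y × Z → ℝ) : margXZ (swapXY p) = margYZ p := rfl

theorem margYZ_swapXY [Fintype Y] (p : X × Y × Z → ℝ) : margYZ (swapXY p) = margXZ p := rfl

theorem pX_swapXY [Fintype X] [Fintype Z] (p : X × Y × Z → ℝ) : pX (swapXY p) = pY p := rfl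

theorem pY_swapXY [Fintype Y] [Fintype Z] (p : X × Y × Z → ℝ) : pY (swapXY p) = pX p := rfl

variable [Fintype X] [Fintype Y]

theorem pZ_swapXY (p : X × Y × Z → ℝ) : pZ (swapXY p) = pZ p :=
  funext fun _ => sum_comm

theorem doOp_swapXY (p : X × Y × Z → ℝ) (c : Z → ℝ) :
    doOp (swapXY p) c = swapXY (doOp p c) := by
  funext t
  simp only [doOp, pZ_swapXY]
  rfl

theorem doy_swapXY [Fintype Z] (p : X × Y × Z → ℝ) (x : X) :
    doy (swapXY p) x = swapXY (dox p x) :=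
  doOp_swapXY p (cx p x)

theorem condIndepCoupling_swapXY [Fintype Z] (p : X × Y × Z → ℝ) (x : X) (y : Y) :
    condIndepCoupling (swapXY p) y x = condIndepCoupling p x y := by
  simp only [condIndepCoupling, margXZ_swapXY, margYZ_swapXY, pZ_swapXY]
  exact sum_congr rfl fun _ _ => mul_div_left_comm _ _ _

theorem pX_mul_pY_dox [Fintype Z] {p : X × Y × Z → ℝ} (hp : ∀ t, 0 ≤ p t) (x : X) (y : Y) :
    pX p x * pY (dox p x) y = condIndepCoupling p x y :=
  calc pX p x * pY (dox p x) y
      = pY (swapXY p) x * pX (doy (swapXY p) x) y := by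
        rw [doy_swapXY, pX_swapXY, pY_swapXY]
    _ = condIndepCoupling (swapXY p) y x := pY_mul_pX_doy (fun _ => hp _) y x
    _ = condIndepCoupling p x y := condIndepCoupling_swapXY p x y

end Swap

theorem stmt10_general {X Y Z : Type*} [Fintype X] [Fintype Y] [Fintype Z]
    (p : X × Y × Z → ℝ) (hp0 : ∀ t, 0 ≤ p t) (x : X) (y : Y) :
    (if 0 < pY p y then pY p y * pX (doy p y) x else 0) =
      (if 0 < pX p x then pX p x * pY (dox p x) y else 0) := by
  rw [ite_pos_mul_of_nonneg (pY_nonneg hp0 y), ite_pos_mul_of_nonneg (pX_nonneg hp0 x),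
    pY_mul_pX_doy hp0, pX_mul_pY_dox hp0]

theorem stmt10 {X Y Z : Type*} [Fintype X] [Fintype Y] [Fintype Z]
    [Nonempty X] [Nonempty Y] [Nonempty Z]
    (p : X × Y × Z → ℝ) (hp0 : ∀ t, 0 ≤ p t) (hp1 : ∑ t, p t = 1) :
    ∀ (x : X) (y : Y),
      (if 0 < pY p y then pY p y * pX (doy p y) x else 0) =
      (if 0 < pX p x then pX p x * pY (dox p x) y else 0) :=
  stmt10_general p hp0
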